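/- Let π* be an optimal assignment for weights w. Then every iterate Δ^k of the recursive sensitivity algorithm is an allowable perturbation for (w, π*); in particular π* is optimal for w + Δ^k for every k. -/

import Mathlib

open Finset Filter Topology

/-- Cost of an assignment `π : T → A` under weights `w : A × T → ℝ`. -/
noncomputable def cost {A T : Type*} [Fintype T] (w : A × T → ℝ) (π : T → A) : ℝ :=
  ∑ b : T, w (π b, b)

/-- `πs` is an optimal assignment for weights `w`: it is injective (an assignment)
and minimizes the cost among all assignments. -/
def Optimal {A T : Type*} [Fintype T] (w : A × T → ℝ) (πs : T → A) : Prop :=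
  Function.Injective πs ∧ ∀ π : T → A, Function.Injective π → cost w πs ≤ cost w π

/-- `δ` is an allowable perturbation for `(w, πs)`: `πs` remains optimal for `w + δ`. -/
def Allowable {A T : Type*} [Fintype T] (w δ : A × T → ℝ) (πs : T → A) : Prop :=
  Optimal (w + δ) πs

-- The element-wise sensitivity of edge `(a, b)` for weights `w` and assignment `πs`.
open Classical in
noncomputable def sens {A T : Type*} [Fintype T] (w : A × T → ℝ) (πs : T → A)
    (a : A) (b : T) : ℝ :=
  if πs b = a then
    sInf {c | ∃ π : T → A, Function.Injective π ∧ π b ≠ a ∧ cost w π = c} - cost w πs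
  else
    cost w πs - sInf {c | ∃ π : T → A, Function.Injective π ∧ π b = a ∧ cost w π = c}

/-- Iterates of the recursive sensitivity algorithm: `Δ⁰ = 0` and
`Δ^{k+1}(a,b) = Δ^k(a,b) + s_{w+Δ^k}(a,b)/(2N)` with `N = |T|`. -/
noncomputable def iter {A T : Type*} [Fintype T] (w : A × T → ℝ) (πs : T → A) :
    ℕ → (A × T → ℝ)
  | 0 => 0
  | k + 1 => fun e =>
      iter w πs k e + sens (w + iter w πs k) πs e.1 e.2 / (2 * (Fintype.card T : ℝ))

/-!
Passing from `πs` to another assignment `π` costs the gap `g = cost w π - cost w πs ≥ 0`. At a task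
`b` where the two differ, `π` competes both in the infimum over the assignments avoiding the edge
`(πs b, b)` and in the infimum over those using `(π b, b)`; so the first edge has sensitivity at
most `g` and the second at least `-g`. Adding `ε` times the sensitivities therefore lowers the gap
by at most `2 * ε * g` per task, and the gap stays nonnegative if `2 * N * ε ≤ 1`, where `N` is the
number of tasks.
-/

section

variable {A T : Type*} [Fintype T] {w δ η : A × T → ℝ} {πs π : T → A}

theorem cost_add (w δ : A × T → ℝ) (π : T → A) : cost (w + δ) π = cost w π + cost δ π :=
  sum_add_distrib

theorem cost_smul (ε : ℝ) (δ : A × T → ℝ) (π : T → A) : cost (ε • δ) π = ε * cost δ π :=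
  (mul_sum _ _ _).symm

theorem allowable_of_cost_sub_le (hπs : Function.Injective πs)
    (hδ : ∀ π : T → A, Function.Injective π → cost δ πs - cost δ π ≤ cost w π - cost w πs) :
    Allowable w δ πs := by
  refine ⟨hπs, fun π hπ => ?_⟩
  rw [cost_add, cost_add]
  linarith [hδ π hπ]

theorem allowable_zero_iff : Allowable w 0 πs ↔ Optimal w πs := by
  rw [Allowable, add_zero]

theorem allowable_add_iff : Allowable w (δ + η) πs ↔ Allowable (w + δ) η πs := by
  rw [Allowable, Allowable, add_assoc]

theorem Optimal.sInf_cost_le (hopt : Optimal w πs) {P : (T → A) → Prop}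
    (hπ : Function.Injective π) (hP : P π) :
    sInf {c | ∃ σ : T → A, Function.Injective σ ∧ P σ ∧ cost w σ = c} ≤ cost w π := by
  refine csInf_le ⟨cost w πs, ?_⟩ ⟨π, hπ, hP, rfl⟩
  rintro _ ⟨σ, hσ, -, rfl⟩
  exact hopt.2 σ hσ

theorem Optimal.sens_le_of_ne (hopt : Optimal w πs) (hπ : Function.Injective π) {b : T}
    (hb : π b ≠ πs b) : sens w πs (πs b) b ≤ cost w π - cost w πs := by
  rw [sens, if_pos rfl]
  exact sub_le_sub_right (hopt.sInf_cost_le (P := fun σ => σ b ≠ πs b) hπ hb) _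

theorem Optimal.le_sens_of_ne (hopt : Optimal w πs) (hπ : Function.Injective π) {b : T}
    (hb : π b ≠ πs b) : cost w πs - cost w π ≤ sens w πs (π b) b := by
  rw [sens, if_neg hb.symm]
  exact sub_le_sub_left (hopt.sInf_cost_le (P := fun σ => σ b = π b) hπ rfl) _

theorem Optimal.sens_sub_sens_le (hopt : Optimal w πs) (hπ : Function.Injective π) (b : T) :
    sens w πs (πs b) b - sens w πs (π b) b ≤ 2 * (cost w π - cost w πs) := by
  by_cases hb : π b = πs b
  · rw [hb]
    linarith [hopt.2 π hπ]
  · linarith [hopt.sens_le_of_ne hπ hb, hopt.le_sens_of_ne hπ hb]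

theorem Optimal.cost_sens_sub_cost_sens_le (hopt : Optimal w πs) (hπ : Function.Injective π) :
    cost (Function.uncurry (sens w πs)) πs - cost (Function.uncurry (sens w πs)) π ≤
      2 * Fintype.card T * (cost w π - cost w πs) :=
  calc
    _ = ∑ b, (sens w πs (πs b) b - sens w πs (π b) b) := (sum_sub_distrib _ _).symm
    _ ≤ Fintype.card T • (2 * (cost w π - cost w πs)) :=
      sum_le_card_nsmul _ _ _ fun b _ => hopt.sens_sub_sens_le hπ b
    _ = 2 * Fintype.card T * (cost w π - cost w πs) := by rw [nsmul_eq_mul]; ring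

theorem Optimal.allowable_smul_sens (hopt : Optimal w πs) {ε : ℝ} (hε : 0 ≤ ε)
    (hcard : ε * (2 * Fintype.card T) ≤ 1) :
    Allowable w (ε • Function.uncurry (sens w πs)) πs := by
  refine allowable_of_cost_sub_le hopt.1 fun π hπ => ?_
  have hgap : 0 ≤ cost w π - cost w πs := sub_nonneg.2 (hopt.2 π hπ)
  rw [cost_smul, cost_smul, ← mul_sub]
  calc
    _ ≤ ε * (2 * Fintype.card T * (cost w π - cost w πs)) :=
      mul_le_mul_of_nonneg_left (hopt.cost_sens_sub_cost_sens_le hπ) hε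
    _ = ε * (2 * Fintype.card T) * (cost w π - cost w πs) := (mul_assoc _ _ _).symm
    _ ≤ cost w π - cost w πs := mul_le_of_le_one_left hgap hcard

theorem iter_succ (w : A × T → ℝ) (πs : T → A) (k : ℕ) :
    iter w πs (k + 1) =
      iter w πs k +
        (2 * (Fintype.card T : ℝ))⁻¹ • Function.uncurry (sens (w + iter w πs k) πs) :=
  funext fun _ => congrArg _ (div_eq_inv_mul _ _)

-- For infinite `A`, the infima in `sens` need not be attained.
theorem stmt12_general (hopt : Optimal w πs) (k : ℕ) : Allowable w (iter w πs k) πs := by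
  induction k with
  | zero => exact allowable_zero_iff.2 hopt
  | succ k ih =>
    rw [iter_succ, allowable_add_iff]
    exact Optimal.allowable_smul_sens ih (by positivity) inv_mul_le_one

end

theorem stmt12 {A T : Type*} [Fintype A] [Fintype T] [Nonempty A] [Nonempty T]
    (hT : 2 ≤ Fintype.card T) (hAT : Fintype.card T ≤ Fintype.card A)
    (w : A × T → ℝ) (πs : T → A)
    (hopt : Optimal w πs) :
    ∀ k : ℕ, Allowable w (iter w πs k) πs :=
  stmt12_general hopt
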